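/- arXiv:1112.6340 — 7 statements merged into one kernel-verified Lean document; each statement's English description precedes it below -/
import Mathlib

section
/- Let A be a Noetherian ℂ-algebra, M a finitely generated left A-module, and T an A-module automorphism of M. Let M⁰ ⊆ M be a ℂ-linear subspace such that T⁻¹(M⁰) ⊆ M⁰ and M = ⋃_{r>0} Tʳ(M⁰). Then the A-submodule of M generated by M⁰ is all of M, i.e. A·M⁰ = M. -/
/-! The submodules `Tʳ(A·M⁰)`, that is, the preimages of `A·M⁰` under the powers of `g = T⁻¹`,
form an ascending chain with union `M`. As `M` is finitely generated, some member of the chain is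
already all of `M`, so `g ^ n` maps `M` into `A·M⁰`; but `g ^ n` is surjective. -/

section PowersOfEndomorphism

variable {A M : Type*} [Semiring A] [AddCommMonoid M] [Module A M]
  {g : Module.End A M} {N : Submodule A M}

theorem symm_pow_apply_pow_apply (T : M ≃ₗ[A] M) (r : ℕ) (x : M) :
    ((T.symm : Module.End A M) ^ r) ((T ^ r) x) = x := by
  rw [Module.End.coe_pow, LinearEquiv.coe_coe, LinearEquiv.coe_pow]
  exact Function.LeftInverse.iterate T.symm_apply_apply r x

theorem monotone_comap_pow_of_le_comap (hg : N ≤ N.comap g) :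
    Monotone fun r : ℕ => N.comap (g ^ r) :=
  monotone_nat_of_le_succ fun r m hm => by
    rw [Submodule.mem_comap, pow_succ']
    exact hg hm

theorem exists_range_pow_le_of_forall_exists_pow_mem [Module.Finite A M]
    (hg : N ≤ N.comap g) (hN : ∀ m : M, ∃ r : ℕ, (g ^ r) m ∈ N) :
    ∃ n : ℕ, LinearMap.range (g ^ n) ≤ N := by
  let chain : ℕ →o Submodule A M := ⟨fun r => N.comap (g ^ r), monotone_comap_pow_of_le_comap hg⟩
  have iSup_chain : iSup chain = ⊤ := eq_top_iff.mpr fun m _ =>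
    let ⟨r, hr⟩ := hN m
    le_iSup chain r hr
  obtain ⟨n, hn⟩ := Module.Finite.fg_top.stabilizes_of_iSup_eq chain iSup_chain
  exact ⟨n, LinearMap.range_le_iff_comap.mpr hn.symm⟩

theorem span_of_exhausting_subspace_general [Module.Finite A M] {S : Set M}
    (hg : Function.Surjective g) (hinv : Set.MapsTo g S S)
    (hcover : ∀ m : M, ∃ r : ℕ, (g ^ r) m ∈ S) :
    Submodule.span A S = ⊤ := by
  have span_le_comap : Submodule.span A S ≤ (Submodule.span A S).comap g :=
    Submodule.span_le.mpr fun _ hx => Submodule.subset_span (hinv hx)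
  obtain ⟨n, hn⟩ := exists_range_pow_le_of_forall_exists_pow_mem span_le_comap
    fun m => (hcover m).imp fun _ hr => Submodule.subset_span hr
  have range_pow : LinearMap.range (g ^ n) = ⊤ :=
    LinearMap.range_eq_top.mpr (Module.End.coe_pow g n ▸ hg.iterate n)
  exact top_le_iff.mp (range_pow ▸ hn)

end PowersOfEndomorphism

/-- Let `A` be a Noetherian `ℂ`-algebra, `M` a finitely generated left `A`-module, `T`
an `A`-module automorphism of `M`, and `M⁰ ⊆ M` a `ℂ`-subspace with `T⁻¹(M⁰) ⊆ M⁰` and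
`M = ⋃_{r>0} Tʳ(M⁰)`. Then the `A`-submodule generated by `M⁰` is all of `M`. -/
theorem span_of_exhausting_subspace
    (A : Type*) [Ring A] [Algebra ℂ A] [IsNoetherianRing A]
    (M : Type*) [AddCommGroup M] [Module A M] [Module.Finite A M]
    [Module ℂ M] [IsScalarTower ℂ A M]
    (T : M ≃ₗ[A] M) (M0 : Submodule ℂ M)
    (hinv : ∀ x ∈ M0, T.symm x ∈ M0)
    (hcover : ∀ m : M, ∃ r : ℕ, 0 < r ∧ ∃ x ∈ M0, (T ^ r) x = m) :
    Submodule.span A (M0 : Set M) = ⊤ := by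
  exact span_of_exhausting_subspace_general T.symm.surjective hinv fun m =>
    (hcover m).imp fun r ⟨_, _, hx, hm⟩ => by rwa [← hm, symm_pow_apply_pow_apply]
end

section
/- Let A be a Noetherian ℂ-algebra, M a finitely generated left A-module, T an A-module automorphism of M, and M⁰ ⊆ M a ℂ-subspace with T⁻¹(M⁰) ⊆ M⁰ and M = ⋃_{r>0} Tʳ(M⁰). Let N be a left A-module and a : M⁰ → N a ℂ-linear map which is A-compatible, meaning: for every m ∈ M and every h ∈ A there exists an integer N(m,h) > 0 such that for all n > N(m,h) one has T⁻ⁿm ∈ M⁰, h·(T⁻ⁿm) ∈ M⁰, and h·a(T⁻ⁿm) = a(h·T⁻ⁿm). Then there exists a unique A-module homomorphism ã : M → N such that for every m ∈ M there is n₀ with ã(T⁻ⁿm) = a(T⁻ⁿm) for all n ≥ n₀ (where T⁻ⁿm ∈ M⁰ for such n). -/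
/-!
For large `n` the maps `m ↦ a (T⁻ⁿ m)` respect any given finite set of linear relations. A finitely
presented module has finitely many generators and relations, so these maps can be replaced by
`A`-linear maps `Fₙ : M → N` with `Fₙ m = a (T⁻ⁿ m)` for `n` large depending on `m`. Then
`Fₙ₊₁ m = Fₙ (T⁻¹ m)` for large `n`, and since linear maps are determined by finitely many values,
`Fₙ₊₁ = Fₙ ∘ T⁻¹` for all `n ≥ n₁`. Hence `ã = F_{n₁} ∘ T^{n₁}` satisfies `ã ∘ T⁻ⁿ = Fₙ` for all
`n ≥ n₁`. Two extensions agree, for some `n`, on the images under `T⁻ⁿ` of the generators of `M`,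
and these images again generate `M`.
-/

open Filter

section Semiring

variable {ι R M N : Type*} {l : Filter ι} [Semiring R] [AddCommMonoid M] [Module R M]
  [AddCommMonoid N] [Module R N]

theorem eventually_le_of_fg {K : Submodule R M} (hK : K.FG) {P : ι → Submodule R M}
    (hP : ∀ v ∈ K, ∀ᶠ i in l, v ∈ P i) : ∀ᶠ i in l, K ≤ P i := by
  obtain ⟨s, rfl⟩ := hK
  have hs : ∀ᶠ i in l, ∀ v ∈ s, v ∈ P i :=
    (eventually_all_finset s).2 fun v hv => hP v (Submodule.subset_span hv)
  exact hs.mono fun i hi => Submodule.span_le.2 hi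

theorem eventually_eq_of_forall_eventually_apply_eq [Module.Finite R M] {F G : ι → M →ₗ[R] N}
    (h : ∀ m, ∀ᶠ i in l, F i m = G i m) : ∀ᶠ i in l, F i = G i := by
  have hle : ∀ᶠ i in l, ⊤ ≤ LinearMap.eqLocus (F i) (G i) :=
    eventually_le_of_fg Module.Finite.fg_top fun m _ => h m
  exact hle.mono fun i hi => LinearMap.eqLocus_eq_top.1 (top_le_iff.1 hi)

variable (R l) in
/-- A family of maps `b i : M → N` is eventually linear along `l` if each single instance of
additivity and homogeneity holds for `b i` eventually in `i`; equivalently, the induced map from `M`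
to germs of functions `ι → N` along `l` is `R`-linear. -/
structure IsEventuallyLinear (b : ι → M → N) : Prop where
  map_add : ∀ x y, ∀ᶠ i in l, b i (x + y) = b i x + b i y
  map_smul : ∀ (r : R) x, ∀ᶠ i in l, b i (r • x) = r • b i x

namespace IsEventuallyLinear

variable {b : ι → M → N}

theorem map_zero (hb : IsEventuallyLinear R l b) : ∀ᶠ i in l, b i 0 = 0 := by
  simpa only [zero_smul] using hb.map_smul 0 0

theorem map_sum (hb : IsEventuallyLinear R l b) {κ : Type*} (s : Finset κ) (x : κ → M) :
    ∀ᶠ i in l, b i (∑ j ∈ s, x j) = ∑ j ∈ s, b i (x j) := by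
  classical
  induction s using Finset.induction_on with
  | empty => simpa only [Finset.sum_empty] using hb.map_zero
  | insert j s hj ih =>
    filter_upwards [ih, hb.map_add (x j) (∑ j ∈ s, x j)] with i hsum hadd
    rw [Finset.sum_insert hj, Finset.sum_insert hj, hadd, hsum]

theorem map_linearCombination (hb : IsEventuallyLinear R l b) {κ : Type*} [Fintype κ]
    (x : κ → M) (v : κ → R) :
    ∀ᶠ i in l, b i (Fintype.linearCombination R x v) =
      Fintype.linearCombination R (fun j => b i (x j)) v := by
  have hsmul : ∀ᶠ i in l, ∀ j, b i (v j • x j) = v j • b i (x j) :=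
    eventually_all.2 fun j => hb.map_smul (v j) (x j)
  filter_upwards [hb.map_sum Finset.univ fun j => v j • x j, hsmul] with i hsum hi
  simp only [Fintype.linearCombination_apply, hsum, hi]

end IsEventuallyLinear

section Iterates

variable [Module.Finite R M] {S : M ≃ₗ[R] M}

theorem exists_eventually_apply_pow_eq {F : ℕ → M →ₗ[R] N}
    (hF : ∀ m, ∀ᶠ n in atTop, F (n + 1) m = F n (S m)) :
    ∃ f : M →ₗ[R] N, ∀ᶠ n in atTop, ∀ m, f ((S ^ n) m) = F n m := by
  have hstep : ∀ᶠ n in atTop, F (n + 1) = F n ∘ₗ S :=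
    eventually_eq_of_forall_eventually_apply_eq hF
  obtain ⟨n₁, hn₁⟩ := eventually_atTop.1 hstep
  refine ⟨F n₁ ∘ₗ (S ^ n₁).symm, eventually_atTop.2 ⟨n₁, fun n hn => ?_⟩⟩
  induction n, hn using Nat.le_induction with
  | base => simp
  | succ n hn ih =>
    intro m
    rw [pow_succ, LinearEquiv.mul_apply, ih, hn₁ n hn, LinearMap.comp_apply, LinearEquiv.coe_coe]

theorem eq_of_eventually_apply_pow_eq {f g : M →ₗ[R] N}
    (h : ∀ m, ∀ᶠ n in atTop, f ((S ^ n) m) = g ((S ^ n) m)) : f = g := by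
  let iter (n : ℕ) : M →ₗ[R] M := (S ^ n : M ≃ₗ[R] M)
  have hcomp : ∀ᶠ n in atTop, f ∘ₗ iter n = g ∘ₗ iter n :=
    eventually_eq_of_forall_eventually_apply_eq (F := (f ∘ₗ iter ·)) (G := (g ∘ₗ iter ·)) h
  obtain ⟨n, hn⟩ := hcomp.exists
  exact (LinearMap.cancel_right (S ^ n).surjective).1 hn

end Iterates

/-- `R`-compatibility of an additive map `a` defined on `M0 ⊆ M` only, with respect to an
automorphism `T`: for each `m` and `h`, the identity `h • a (T⁻ⁿ m) = a (h • T⁻ⁿ m)` makes sense and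
holds for all large `n`. -/
def IsCompatible (T : M ≃ₗ[R] M) (M0 : AddSubmonoid M) (a : M0 →+ N) : Prop :=
  ∀ (m : M) (h : R), ∀ᶠ n : ℕ in atTop,
    ∃ (h1 : (T.symm ^ n) m ∈ M0) (h2 : h • (T.symm ^ n) m ∈ M0),
      h • a ⟨(T.symm ^ n) m, h1⟩ = a ⟨h • (T.symm ^ n) m, h2⟩

namespace IsCompatible

variable {T : M ≃ₗ[R] M} {M0 : AddSubmonoid M} {a : M0 →+ N}

theorem eventually_mem (ha : IsCompatible T M0 a) (m : M) :
    ∀ᶠ n : ℕ in atTop, (T.symm ^ n) m ∈ M0 :=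
  (ha m 0).mono fun _ ⟨hm, _⟩ => hm

theorem isEventuallyLinear_extend (ha : IsCompatible T M0 a) :
    IsEventuallyLinear R atTop fun (n : ℕ) m =>
      Function.extend Subtype.val a 0 ((T.symm ^ n) m) := by
  have hext {x : M} (hx : x ∈ M0) : Function.extend Subtype.val a 0 x = a ⟨x, hx⟩ :=
    Subtype.val_injective.extend_apply a 0 ⟨x, hx⟩
  refine ⟨fun x y => ?_, fun h m => ?_⟩
  · filter_upwards [ha.eventually_mem x, ha.eventually_mem y] with n hx hy
    rw [map_add, hext hx, hext hy, hext (add_mem hx hy), ← map_add a, AddMemClass.mk_add_mk]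
  · filter_upwards [ha m h] with n ⟨h1, h2, heq⟩
    rw [map_smul, hext h1, hext h2, heq]

end IsCompatible

end Semiring

section Ring

variable {ι R M N : Type*} [Ring R] [AddCommGroup M] [Module R M] [AddCommGroup N] [Module R N]

theorem exists_comp_eq_of_ker_le_ker {L : Type*} [AddCommGroup L] [Module R L] {π : L →ₗ[R] M}
    (hπ : Function.Surjective π) {φ : L →ₗ[R] N} (h : LinearMap.ker π ≤ LinearMap.ker φ) :
    ∃ f : M →ₗ[R] N, f ∘ₗ π = φ := by
  let e := π.quotKerEquivOfSurjective hπ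
  refine ⟨(LinearMap.ker π).liftQ φ h ∘ₗ e.symm, LinearMap.ext fun v => ?_⟩
  have he : e.symm (π v) = (LinearMap.ker π).mkQ v := e.symm_apply_eq.2 rfl
  simp [he]

theorem IsEventuallyLinear.exists_linearMap [Module.FinitePresentation R M] {l : Filter ι}
    {b : ι → M → N} (hb : IsEventuallyLinear R l b) :
    ∃ F : ι → M →ₗ[R] N, ∀ m, ∀ᶠ i in l, F i m = b i m := by
  obtain ⟨k, x, hx⟩ := Module.Finite.exists_fin (R := R) (M := M)
  let π : (Fin k → R) →ₗ[R] M := Fintype.linearCombination R x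
  let φ (i : ι) : (Fin k → R) →ₗ[R] N := Fintype.linearCombination R fun j => b i (x j)
  have hπ : Function.Surjective π := by
    rw [← LinearMap.range_eq_top, Fintype.range_linearCombination, hx]
  have hφ (v) : ∀ᶠ i in l, b i (π v) = φ i v := hb.map_linearCombination x v
  have hker : ∀ᶠ i in l, LinearMap.ker π ≤ LinearMap.ker (φ i) := by
    refine eventually_le_of_fg (Module.FinitePresentation.fg_ker π hπ) fun v hv => ?_
    filter_upwards [hφ v, hb.map_zero] with i hi h0
    rw [LinearMap.mem_ker, ← hi, LinearMap.mem_ker.1 hv, h0]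
  choose! F hF using fun i (hi : LinearMap.ker π ≤ LinearMap.ker (φ i)) =>
    exists_comp_eq_of_ker_le_ker hπ hi
  refine ⟨F, fun m => ?_⟩
  obtain ⟨v, rfl⟩ := hπ m
  filter_upwards [hφ v, hker] with i hv hi
  rw [hv, ← hF i hi, LinearMap.comp_apply]

theorem exists_unique_extension_of_compatible_map_general [Module.FinitePresentation R M]
    {T : M ≃ₗ[R] M} {M0 : AddSubmonoid M} {a : M0 →+ N} (ha : IsCompatible T M0 a) :
    ∃! f : M →ₗ[R] N, ∀ m, ∀ᶠ n : ℕ in atTop, ∃ hm : (T.symm ^ n) m ∈ M0,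
      f ((T.symm ^ n) m) = a ⟨(T.symm ^ n) m, hm⟩ := by
  obtain ⟨F, hF⟩ := ha.isEventuallyLinear_extend.exists_linearMap
  have hstep (m : M) : ∀ᶠ n in atTop, F (n + 1) m = F n (T.symm m) := by
    filter_upwards [(tendsto_add_atTop_nat 1).eventually (hF m), hF (T.symm m)] with n hm hTm
    rw [hm, hTm, pow_succ, LinearEquiv.mul_apply]
  obtain ⟨f, hf⟩ := exists_eventually_apply_pow_eq hstep
  have hfa (m : M) : ∀ᶠ n : ℕ in atTop, ∃ hm : (T.symm ^ n) m ∈ M0,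
      f ((T.symm ^ n) m) = a ⟨(T.symm ^ n) m, hm⟩ := by
    filter_upwards [hf, hF m, ha.eventually_mem m] with n hfn hFn hm
    exact ⟨hm, by rw [hfn, hFn, Subtype.val_injective.extend_apply a 0 ⟨_, hm⟩]⟩
  refine ⟨f, hfa, fun g hg => eq_of_eventually_apply_pow_eq (S := T.symm) fun m => ?_⟩
  filter_upwards [hg m, hfa m] with n ⟨_, hgn⟩ ⟨_, hfn⟩
  rw [hgn, hfn]

end Ring

/-- Let `A` be a Noetherian `ℂ`-algebra, `M` a finitely generated left `A`-module, `T` an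
`A`-module automorphism of `M`, and `M⁰ ⊆ M` a `ℂ`-subspace with `T⁻¹(M⁰) ⊆ M⁰` and
`M = ⋃_{r>0} Tʳ(M⁰)`. Let `N` be a left `A`-module and `a : M⁰ → N` an `A`-compatible
`ℂ`-linear map. Then there exists a unique `A`-module homomorphism `ã : M → N` such that
for every `m ∈ M` we have `ã(T⁻ⁿ m) = a(T⁻ⁿ m)` for all sufficiently large `n`. -/
theorem exists_unique_extension_of_compatible_map
    (A : Type*) [Ring A] [Algebra ℂ A] [IsNoetherianRing A]
    (M : Type*) [AddCommGroup M] [Module A M] [Module.Finite A M]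
    [Module ℂ M] [IsScalarTower ℂ A M]
    (N : Type*) [AddCommGroup N] [Module A N] [Module ℂ N] [IsScalarTower ℂ A N]
    (T : M ≃ₗ[A] M) (M0 : Submodule ℂ M)
    (hinv : ∀ x ∈ M0, T.symm x ∈ M0)
    (hcover : ∀ m : M, ∃ r : ℕ, 0 < r ∧ ∃ x ∈ M0, (T ^ r) x = m)
    (a : M0 →ₗ[ℂ] N)
    (hcompat : ∀ (m : M) (h : A), ∃ N0 : ℕ, 0 < N0 ∧ ∀ n > N0,
      ∃ (h1 : (T.symm ^ n) m ∈ M0) (h2 : h • (T.symm ^ n) m ∈ M0),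
        h • a ⟨(T.symm ^ n) m, h1⟩ = a ⟨h • (T.symm ^ n) m, h2⟩) :
    ∃! atil : M →ₗ[A] N, ∀ m : M, ∃ n0 : ℕ, ∀ n ≥ n0,
      ∃ hm : (T.symm ^ n) m ∈ M0,
        atil ((T.symm ^ n) m) = a ⟨(T.symm ^ n) m, hm⟩ := by
  have := Module.finitePresentation_of_finite A M
  have ha : IsCompatible T M0.toAddSubmonoid a.toAddMonoidHom := fun m h =>
    let ⟨N0, _, hN0⟩ := hcompat m h
    (eventually_gt_atTop N0).mono hN0
  simp only [← eventually_atTop]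
  exact exists_unique_extension_of_compatible_map_general ha
end

section
/- Let F be a nontrivially normed field, t ∈ F with 0 < ‖t‖ < 1, and let E, G be normed vector spaces over F. Let τ : E × G → E × G be a map such that τ(0,s) = (0,s) for every s ∈ G and such that at every point (0,s) the map τ is Fréchet differentiable with derivative equal to the identity operator on E × G. For n ≥ 0 define φₙ : E × G → E × G by φₙ(v,s) = (t⁻ⁿ · (τ(tⁿ·v, s))₁ , (τ(tⁿ·v, s))₂), where (·)₁ and (·)₂ denote the components in E and G. Then for every x ∈ E × G, φₙ(x) → x as n → ∞. -/
/-!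
The fibre component of `φ_c(v, s) = (c⁻¹ • (τ(c • v, s))₁, (τ(c • v, s))₂)` is the difference
quotient of `a ↦ (τ(a • v, s))₁` at `a = 0`, because this function vanishes there. Hence it
converges to a line derivative of `τ` as `c → 0`, whereas the base component converges by
continuity alone.
-/

open Filter
open scoped Topology

/-- The conjugate `φ_c` of `τ` by scaling the first factor by `c`, which magnifies `τ` near the
zero section `{0} × G` as `c → 0`. At `c = 0` in a field the junk value `0⁻¹ = 0` makes its
first component vanish, so limits are taken along `𝓝[≠] 0`. -/
def fiberRescale {F E G E' G' : Type*} [Inv F] [SMul F E] [SMul F E']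
    (τ : E × G → E' × G') (c : F) (x : E × G) : E' × G' :=
  (c⁻¹ • (τ (c • x.1, x.2)).1, (τ (c • x.1, x.2)).2)

theorem tendsto_pow_atTop_nhdsNE_zero_of_norm_lt_one {F : Type*} [NormedDivisionRing F] {t : F}
    (ht0 : t ≠ 0) (ht1 : ‖t‖ < 1) : Tendsto (fun n : ℕ => t ^ n) atTop (𝓝[≠] 0) :=
  tendsto_nhdsWithin_iff.mpr
    ⟨tendsto_pow_atTop_nhds_zero_of_norm_lt_one ht1, .of_forall fun _ => pow_ne_zero _ ht0⟩

section Rescaling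

variable {F : Type*} [NontriviallyNormedField F]

theorem tendsto_inv_smul_of_hasLineDerivAt {E E' : Type*} [AddCommGroup E] [Module F E]
    [NormedAddCommGroup E'] [NormedSpace F E'] {f : E → E'} {w : E'} {x v : E}
    (hf : HasLineDerivAt F f w x v) (hx : f x = 0) :
    Tendsto (fun a : F => a⁻¹ • f (x + a • v)) (𝓝[≠] 0) (𝓝 w) := by
  simpa only [hx, sub_zero] using hf.tendsto_slope_zero

theorem pointwise_tendsto_of_fderiv_id_general {E G E' G' α : Type*} [AddCommGroup E] [Module F E]
    [NormedAddCommGroup E'] [NormedSpace F E'] [TopologicalSpace G']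
    {τ : E × G → E' × G'} {v : E} {s : G} {w : E'} (hzero : (τ (0, s)).1 = 0)
    (hfiber : HasLineDerivAt F (fun u => (τ (u, s)).1) w 0 v)
    (hbase : ContinuousAt (fun a : F => (τ (a • v, s)).2) 0)
    {l : Filter α} {c : α → F} (hc : Tendsto c l (𝓝[≠] 0)) :
    Tendsto (fun i => fiberRescale τ (c i) (v, s)) l (𝓝 (w, (τ (0, s)).2)) := by
  have fiber_limit : Tendsto (fun a : F => a⁻¹ • (τ (a • v, s)).1) (𝓝[≠] 0) (𝓝 w) := by
    simpa only [zero_add] using tendsto_inv_smul_of_hasLineDerivAt hfiber hzero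
  have base_limit : Tendsto (fun a : F => (τ (a • v, s)).2) (𝓝[≠] 0) (𝓝 (τ (0, s)).2) := by
    simpa only [zero_smul] using hbase.tendsto.mono_left nhdsWithin_le_nhds
  exact (fiber_limit.prodMk_nhds base_limit).comp hc

theorem tendsto_fiberRescale_of_hasFDerivAt {E G E' G' α : Type*}
    [NormedAddCommGroup E] [NormedSpace F E] [NormedAddCommGroup G] [NormedSpace F G]
    [NormedAddCommGroup E'] [NormedSpace F E'] [NormedAddCommGroup G'] [NormedSpace F G']
    {τ : E × G → E' × G'} {τ' : E × G →L[F] E' × G'} {s : G}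
    (hτ : HasFDerivAt τ τ' (0, s)) (hzero : (τ (0, s)).1 = 0) (v : E)
    {l : Filter α} {c : α → F} (hc : Tendsto c l (𝓝[≠] 0)) :
    Tendsto (fun i => fiberRescale τ (c i) (v, s)) l (𝓝 ((τ' (v, 0)).1, (τ (0, s)).2)) := by
  have hslice : HasFDerivAt (fun u => τ (u, s)) (τ' ∘L .inl F E G) 0 :=
    hτ.comp 0 (hasFDerivAt_prodMk_left 0 s)
  have hray : ContinuousAt (fun a : F => τ (a • v, s)) 0 :=
    hslice.continuousAt.comp_of_eq (by fun_prop) (zero_smul F v)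
  exact pointwise_tendsto_of_fderiv_id_general hzero (hslice.fst.hasLineDerivAt v) hray.snd hc

end Rescaling

/-- Let `F` be a nontrivially normed field, `t ∈ F` with `0 < ‖t‖ < 1`, and `E`, `G`
normed `F`-vector spaces. Let `τ : E × G → E × G` fix every point `(0,s)` and be Fréchet
differentiable there with derivative the identity. Define
`φₙ(v,s) = (t⁻ⁿ • (τ(tⁿ•v, s))₁, (τ(tⁿ•v, s))₂)`. Then `φₙ(x) → x` for every `x`. -/
theorem pointwise_tendsto_of_fderiv_id
    (F : Type*) [NontriviallyNormedField F]
    (E G : Type*) [NormedAddCommGroup E] [NormedSpace F E]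
    [NormedAddCommGroup G] [NormedSpace F G]
    (t : F) (ht0 : 0 < ‖t‖) (ht1 : ‖t‖ < 1)
    (τ : E × G → E × G)
    (hfix : ∀ s : G, τ (0, s) = (0, s))
    (hderiv : ∀ s : G, HasFDerivAt τ (ContinuousLinearMap.id F (E × G)) (0, s))
    (x : E × G) :
    Filter.Tendsto
      (fun n : ℕ =>
        (((t ^ n)⁻¹ • (τ (t ^ n • x.1, x.2)).1, (τ (t ^ n • x.1, x.2)).2) : E × G))
      Filter.atTop (nhds x) := by
  simpa only [fiberRescale, hfix, ContinuousLinearMap.id_apply] using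
    tendsto_fiberRescale_of_hasFDerivAt (hderiv x.2) (congrArg Prod.fst (hfix x.2)) x.1
      (tendsto_pow_atTop_nhdsNE_zero_of_norm_lt_one (norm_pos_iff.mp ht0) ht1)
end

section
/- Let F be a nontrivially normed field, t ∈ F with 0 < ‖t‖ < 1, and let E, G be normed vector spaces over F. Let τ : E × G → E × G be a map such that τ(0,s) = (0,s) for every s ∈ G and such that at every point (0,s) the map τ is strictly Fréchet differentiable with derivative equal to the identity operator on E × G. For n ≥ 0 define φₙ : E × G → E × G by φₙ(v,s) = (t⁻ⁿ · (τ(tⁿ·v, s))₁ , (τ(tⁿ·v, s))₂). Then for every compact subset C ⊆ E × G, the sequence φₙ converges to the identity map uniformly on C. -/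
/-!
Since `τ` fixes the zero section, the first component of `φₙ (v, s)` is the difference quotient
`t⁻ⁿ • (τ (tⁿ • v, s) - τ (0, s))₁`. Strictness of the derivative lets both points of this quotient
move, so it converges even when `(v, s)` varies with `n`. Such continuous convergence is locally
uniform, hence uniform on compact sets.
-/

open Filter Topology Asymptotics

section ContinuousConvergence

variable {ι X Y : Type*} [TopologicalSpace X] {l : Filter ι} {F : ι → X → Y} {f : X → Y} {S : Set X}

theorem continuousOn_of_forall_tendsto_prod_nhdsWithin [TopologicalSpace Y] [RegularSpace Y]
    [l.NeBot] (h : ∀ x ∈ S, Tendsto (fun p : ι × X => F p.1 p.2) (l ×ˢ 𝓝[S] x) (𝓝 (f x))) :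
    ContinuousOn f S := by
  intro x hx
  refine (closed_nhds_basis (f x)).tendsto_right_iff.2 fun V ⟨hV, hV_closed⟩ => ?_
  have hFV : ∀ᶠ y in 𝓝[S] x, ∀ᶠ i in l, F i y ∈ V :=
    ((h x hx).comp tendsto_prod_swap).eventually_mem hV |>.curry
  filter_upwards [hFV, self_mem_nhdsWithin] with y hyV hyS
  have hF : Tendsto (fun i => F i y) l (𝓝 (f y)) :=
    (h y hyS).comp (tendsto_id.prodMk (tendsto_const_pure.mono_right (pure_le_nhdsWithin hyS)))
  exact hV_closed.mem_of_tendsto hF hyV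

theorem tendstoLocallyUniformlyOn_of_forall_tendsto_prod_nhdsWithin [UniformSpace Y]
    (h : ∀ x ∈ S, Tendsto (fun p : ι × X => F p.1 p.2) (l ×ˢ 𝓝[S] x) (𝓝 (f x))) :
    TendstoLocallyUniformlyOn F f l S := by
  rw [tendstoLocallyUniformlyOn_iff_forall_tendsto]
  intro x hx
  obtain rfl | _ := l.eq_or_neBot
  · simp only [bot_prod, tendsto_bot]
  have hf : Tendsto (fun p : ι × X => f p.2) (l ×ˢ 𝓝[S] x) (𝓝 (f x)) :=
    (continuousOn_of_forall_tendsto_prod_nhdsWithin h x hx).tendsto.comp tendsto_snd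
  exact (hf.prodMk_nhds (h x hx)).mono_right (nhds_le_uniformity (f x))

end ContinuousConvergence

section StrictDerivative

variable {𝕜 : Type*} [NontriviallyNormedField 𝕜]
  {E : Type*} [AddCommGroup E] [Module 𝕜 E] [TopologicalSpace E]
  {G : Type*} [AddCommGroup G] [Module 𝕜 G] [TopologicalSpace G]
  {H : Type*} [AddCommGroup H] [Module 𝕜 H]
  {ι : Type*} {l : Filter ι} {c : ι → 𝕜}

theorem tendsto_smul_sub_of_hasStrictFDerivAt [ContinuousAdd E] [ContinuousSMul 𝕜 E]
    [TopologicalSpace H] [ContinuousAdd H] [ContinuousSMul 𝕜 H]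
    {f : E → H} {f' : E →L[𝕜] H} {x v : E} {a b : ι → E}
    (hf : HasStrictFDerivAt f f' x) (ha : Tendsto a l (𝓝 x)) (hb : Tendsto b l (𝓝 x))
    (hv : Tendsto (fun i => c i • (a i - b i)) l (𝓝 v)) :
    Tendsto (fun i => c i • (f (a i) - f (b i))) l (𝓝 (f' v)) := by
  have herror : (fun i => c i • (f (a i) - f (b i)) - f' (c i • (a i - b i)))
      =o[𝕜; l] (1 : ι → 𝕜) :=
    calc
      (fun i => c i • (f (a i) - f (b i)) - f' (c i • (a i - b i)))
          =o[𝕜; l] fun i => c i • (a i - b i) := by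
        simpa [smul_sub] using
          (hf.isLittleOTVS.comp_tendsto (ha.prodMk_nhds hb)).smul_left c
      _ =O[𝕜; l] (1 : ι → 𝕜) := hv.isBigOTVS_one _
  rw [isLittleOTVS_one] at herror
  simpa using herror.add ((map_continuous f').tendsto v |>.comp hv)

theorem tendsto_inv_smul_of_hasStrictFDerivAt_zero_prod
    [ContinuousAdd E] [ContinuousSMul 𝕜 E] [ContinuousAdd G] [ContinuousSMul 𝕜 G]
    [TopologicalSpace H] [ContinuousAdd H] [ContinuousSMul 𝕜 H]
    {f : E × G → H} {f' : E × G →L[𝕜] H} {v : E} {s : G} {w : ι → E} {r : ι → G}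
    (hf : HasStrictFDerivAt f f' (0, s)) (hf₀ : ∀ᶠ i in l, f (0, r i) = 0)
    (hc : Tendsto c l (𝓝[≠] 0)) (hw : Tendsto w l (𝓝 v)) (hr : Tendsto r l (𝓝 s)) :
    Tendsto (fun i => (c i)⁻¹ • f (c i • w i, r i)) l (𝓝 (f' (v, 0))) := by
  obtain ⟨hc₀, hc_ne⟩ := tendsto_nhdsWithin_iff.1 hc
  have hcw : Tendsto (fun i => c i • w i) l (𝓝 0) := by simpa using hc₀.smul hw
  have hquot : Tendsto (fun i => (c i)⁻¹ • ((c i • w i, r i) - ((0 : E), r i))) l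
      (𝓝 (v, (0 : G))) := by
    refine (hw.prodMk_nhds tendsto_const_nhds).congr' ?_
    filter_upwards [hc_ne] with i hi
    simp [inv_smul_smul₀ hi]
  refine (tendsto_smul_sub_of_hasStrictFDerivAt hf (hcw.prodMk_nhds hr)
    (tendsto_const_nhds.prodMk_nhds hr) hquot).congr' ?_
  filter_upwards [hf₀] with i hi
  rw [hi, sub_zero]

/-- The limit is the map that `τ` induces between the normal bundles of the zero sections. -/
theorem tendstoUniformlyOn_of_strictFDeriv_id_general
    [ContinuousAdd E] [ContinuousSMul 𝕜 E] [ContinuousAdd G] [ContinuousSMul 𝕜 G]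
    [UniformSpace H] [ContinuousAdd H] [ContinuousSMul 𝕜 H]
    {Y : Type*} [UniformSpace Y] {τ : E × G → H × Y} {A : G → E × G →L[𝕜] H} {S : Set (E × G)}
    (hτ₀ : ∀ x ∈ S, (τ (0, x.2)).1 = 0)
    (hτ₁ : ∀ x ∈ S, HasStrictFDerivAt (fun y => (τ y).1) (A x.2) (0, x.2))
    (hτ₂ : ∀ x ∈ S, ContinuousAt (fun y => (τ y).2) (0, x.2))
    (hc : Tendsto c l (𝓝[≠] 0)) :
    TendstoLocallyUniformlyOn
      (fun i x => ((c i)⁻¹ • (τ (c i • x.1, x.2)).1, (τ (c i • x.1, x.2)).2))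
      (fun x => (A x.2 (x.1, 0), (τ (0, x.2)).2)) l S := by
  refine tendstoLocallyUniformlyOn_of_forall_tendsto_prod_nhdsWithin fun x hx => ?_
  have hc' : Tendsto (fun p : ι × E × G => c p.1) (l ×ˢ 𝓝[S] x) (𝓝[≠] 0) := hc.comp tendsto_fst
  have hmem : ∀ᶠ p : ι × E × G in l ×ˢ 𝓝[S] x, p.2 ∈ S :=
    tendsto_snd.eventually self_mem_nhdsWithin
  have hx' : Tendsto (fun p : ι × E × G => p.2) (l ×ˢ 𝓝[S] x) (𝓝 x) :=
    tendsto_snd.mono_right nhdsWithin_le_nhds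
  have hfst := (continuous_fst.tendsto x).comp hx'
  have hsnd := (continuous_snd.tendsto x).comp hx'
  have hscaled : Tendsto (fun p : ι × E × G => c p.1 • p.2.1) (l ×ˢ 𝓝[S] x) (𝓝 0) := by
    simpa using (tendsto_nhds_of_tendsto_nhdsWithin hc').smul hfst
  exact (tendsto_inv_smul_of_hasStrictFDerivAt_zero_prod (hτ₁ x hx)
    (hmem.mono fun p hp => hτ₀ p.2 hp) hc' hfst hsnd).prodMk_nhds
    ((hτ₂ x hx).tendsto.comp (hscaled.prodMk_nhds hsnd))

end StrictDerivative

theorem tendsto_pow_atTop_nhdsNE_zero {R : Type*} [NormedDivisionRing R] {t : R}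
    (ht₀ : t ≠ 0) (ht₁ : ‖t‖ < 1) : Tendsto (fun n : ℕ => t ^ n) atTop (𝓝[≠] 0) :=
  tendsto_nhdsWithin_iff.2
    ⟨tendsto_pow_atTop_nhds_zero_of_norm_lt_one ht₁, .of_forall fun n => pow_ne_zero n ht₀⟩

/-- Let `F` be a nontrivially normed field, `t ∈ F` with `0 < ‖t‖ < 1`, and `E`, `G`
normed `F`-vector spaces. Let `τ : E × G → E × G` fix every point `(0,s)` and be strictly
Fréchet differentiable there with derivative the identity. Define
`φₙ(v,s) = (t⁻ⁿ • (τ(tⁿ•v, s))₁, (τ(tⁿ•v, s))₂)`. Then `φₙ` converges to the identity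
uniformly on every compact subset `C ⊆ E × G`. -/
theorem tendstoUniformlyOn_of_strictFDeriv_id
    (F : Type*) [NontriviallyNormedField F]
    (E G : Type*) [NormedAddCommGroup E] [NormedSpace F E]
    [NormedAddCommGroup G] [NormedSpace F G]
    (t : F) (ht0 : 0 < ‖t‖) (ht1 : ‖t‖ < 1)
    (τ : E × G → E × G)
    (hfix : ∀ s : G, τ (0, s) = (0, s))
    (hderiv : ∀ s : G, HasStrictFDerivAt τ (ContinuousLinearMap.id F (E × G)) (0, s))
    (C : Set (E × G)) (hC : IsCompact C) :
    TendstoUniformlyOn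
      (fun (n : ℕ) (x : E × G) =>
        (((t ^ n)⁻¹ • (τ (t ^ n • x.1, x.2)).1, (τ (t ^ n • x.1, x.2)).2) : E × G))
      id Filter.atTop C := by
  rw [← tendstoLocallyUniformlyOn_iff_tendstoUniformlyOn_of_compact hC]
  refine (tendstoUniformlyOn_of_strictFDeriv_id_general (A := fun _ => .fst F E G ∘L .id F (E × G))
    (fun x _ => by rw [hfix]) (fun x _ => (hderiv x.2).fst)
    (fun x _ => (hderiv x.2).continuousAt.snd)
    (tendsto_pow_atTop_nhdsNE_zero (norm_pos_iff.1 ht0) ht1)).congr_right fun x _ => ?_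
  simp [hfix]
end

section
/- Let F be a field, n ≥ 1 and d ≥ 1 integers, and let L be an additive subgroup of ℚⁿ with ℤⁿ ⊆ L ⊆ (1/d)·ℤⁿ. Set M = L ∩ (ℚ≥0)ⁿ, an additive submonoid of ℚⁿ. Then the monoid algebra F[M] is a finitely generated and flat module over the monoid algebra F[ℕⁿ], via the F-algebra homomorphism F[ℕⁿ] → F[M] induced by the inclusion of monoids ℕⁿ ⊆ M. -/
/-!
Splitting each coordinate of `x ∈ M` into its floor and its fractional part writes `x` uniquely as
a vector of `ℕⁿ` plus an element of `M ∩ [0, 1)ⁿ`. The monomials `x^b` with `b ∈ M ∩ [0, 1)ⁿ`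
therefore form a basis of `F[M]` over `F[ℕⁿ]`, and there are only finitely many of them because the
coordinates of `M` have a common denominator.
-/

open AddMonoidAlgebra Set

section TranslateBasis

variable {R N P B : Type*} [Semiring R] [AddCommMonoid N] [AddCommMonoid P] [Module R[N] R[P]]
  {ι : N →+ P} {g : B → P}

theorem linearCombination_single_apply_single
    (hsmul : ∀ (a : R[N]) (x : R[P]), a • x = mapDomainRingHom R ι a * x) (b : B) (v : N) (r : R) :
    Finsupp.linearCombination R[N] (fun b ↦ (single (g b) 1 : R[P]))
      (Finsupp.single b (single v r)) = single (ι v + g b) r := by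
  simp [hsmul, single_mul_single]

theorem bijective_linearCombination_single
    (hsmul : ∀ (a : R[N]) (x : R[P]), a • x = mapDomainRingHom R ι a * x)
    (hg : Function.Bijective fun p : B × N ↦ ι p.2 + g p.1) :
    Function.Bijective (Finsupp.linearCombination R[N] fun b ↦ (single (g b) 1 : R[P])) := by
  set φ := Finsupp.linearCombination R[N] fun b ↦ (single (g b) 1 : R[P])
  let e : (B →₀ R[N]) ≃+ R[P] :=
    (Finsupp.mapRange.addEquiv coeffAddEquiv).trans <| Finsupp.curryAddEquiv.symm.trans <|
      (Finsupp.domCongr (.ofBijective _ hg)).trans coeffAddEquiv.symm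
  have he : φ.toAddMonoidHom = e.toAddMonoidHom :=
    Finsupp.addHom_ext' fun b ↦ addMonoidHom_ext fun v r ↦
      (linearCombination_single_apply_single hsmul b v r).trans (by simp [e])
  have hφ : ⇑φ = e := congrArg DFunLike.coe he
  exact hφ ▸ e.bijective

/-- The basis of `R[P]` over `R[N]` consisting of the monomials with exponents `g b`, when every
element of `P` is uniquely of the form `ι v + g b`. The hypothesis `hsmul` stands in for the
module structure along `ι`, which is not a global instance. -/
noncomputable def translateBasis
    (hsmul : ∀ (a : R[N]) (x : R[P]), a • x = mapDomainRingHom R ι a * x)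
    (hg : Function.Bijective fun p : B × N ↦ ι p.2 + g p.1) : Module.Basis B R[N] R[P] :=
  .ofRepr (.symm (.ofBijective _ (bijective_linearCombination_single hsmul hg)))

end TranslateBasis

section UnitBox

variable {σ K : Type*}

/-- The half-open unit box `M ∩ [0, 1)^σ`, as a set of elements of the submonoid `M`: the
exponents of the basis of `R[M]` over `R[ℕ^σ]`. -/
def unitBox [AddMonoidWithOne K] [Preorder K] (M : AddSubmonoid (σ → K)) : Set M :=
  {b | ∀ i, (b : σ → K) i ∈ Ico 0 1}

section Floor

variable [Ring K] [LinearOrder K] [IsStrictOrderedRing K] [FloorSemiring K]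
  {M : AddSubmonoid (σ → K)} {ι : (σ → ℕ) →+ M}

theorem natFloor_coe_add_unitBox (hι : ∀ v, (ι v : σ → K) = fun i ↦ (v i : K))
    (b : unitBox M) (v : σ → ℕ) (i : σ) : ⌊((ι v + b : M) : σ → K) i⌋₊ = v i := by
  obtain ⟨hb₀, hb₁⟩ := b.2 i
  simp [hι, add_comm (v i : K), Nat.floor_add_natCast hb₀, Nat.floor_eq_zero.mpr hb₁]

theorem injective_add_unitBox (hι : ∀ v, (ι v : σ → K) = fun i ↦ (v i : K)) :
    Function.Injective fun p : unitBox M × (σ → ℕ) ↦ ι p.2 + p.1 := by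
  rintro ⟨b, v⟩ ⟨c, w⟩ (h : ι v + (b : M) = ι w + c)
  obtain rfl : v = w := funext fun i ↦ by
    rw [← natFloor_coe_add_unitBox hι b v i, h, natFloor_coe_add_unitBox hι c w i]
  rw [Subtype.ext (add_left_cancel h)]

theorem surjective_add_unitBox {L : AddSubgroup (σ → K)}
    (hM : ∀ x : σ → K, x ∈ M ↔ x ∈ L ∧ ∀ i, 0 ≤ x i)
    (hι : ∀ v, (ι v : σ → K) = fun i ↦ (v i : K)) :
    Function.Surjective fun p : unitBox M × (σ → ℕ) ↦ ι p.2 + p.1 := by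
  intro x
  obtain ⟨hxL, hx₀⟩ := (hM x).mp x.2
  let v : σ → ℕ := fun i ↦ ⌊(x : σ → K) i⌋₊
  have hnonneg (i : σ) : 0 ≤ ((x : σ → K) - ι v) i := by
    simpa [hι, v] using Nat.floor_le (hx₀ i)
  have hlt (i : σ) : ((x : σ → K) - ι v) i < 1 := by
    simpa [hι, v, sub_lt_iff_lt_add'] using Nat.lt_floor_add_one ((x : σ → K) i)
  have hmem : (x : σ → K) - ι v ∈ M :=
    (hM _).mpr ⟨L.sub_mem hxL ((hM _).mp (ι v).2).1, hnonneg⟩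
  exact ⟨(⟨⟨_, hmem⟩, fun i ↦ ⟨hnonneg i, hlt i⟩⟩, v), Subtype.ext (add_sub_cancel _ _)⟩

end Floor

section Finite

variable [Field K] [LinearOrder K] [IsStrictOrderedRing K] {d : ℕ}

theorem finite_Ico_zero_one_inter_int_div (hd : 0 < d) :
    (Ico (0 : K) 1 ∩ {q | ∃ m : ℤ, q = m / d}).Finite := by
  have hd' : (0 : K) < d := Nat.cast_pos.mpr hd
  refine ((finite_Ico (0 : ℤ) d).image fun m : ℤ ↦ (m : K) / d).subset ?_
  rintro _ ⟨⟨h₀, h₁⟩, m, rfl⟩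
  rw [le_div_iff₀ hd', zero_mul] at h₀
  rw [div_lt_one hd'] at h₁
  exact ⟨m, ⟨by exact_mod_cast h₀, by exact_mod_cast h₁⟩, rfl⟩

theorem finite_unitBox [Finite σ] {M : AddSubmonoid (σ → K)} (hd : 0 < d)
    (hMd : ∀ x ∈ M, ∀ i, ∃ m : ℤ, x i = m / d) : (unitBox M).Finite :=
  ((Finite.pi' fun _ ↦ finite_Ico_zero_one_inter_int_div hd).preimage
    Subtype.val_injective.injOn).subset fun b hb i ↦ ⟨hb i, hMd b b.2 i⟩

end Finite

end UnitBox

theorem monoidAlgebra_finite_flat_over_polynomials_general {R K σ : Type*} [Semiring R]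
    [Field K] [LinearOrder K] [IsStrictOrderedRing K] [FloorSemiring K] [Finite σ]
    {d : ℕ} (hd : 0 < d) {L : AddSubgroup (σ → K)}
    (hLd : ∀ x ∈ L, ∀ i, ∃ m : ℤ, x i = m / d)
    {M : AddSubmonoid (σ → K)} (hM : ∀ x : σ → K, x ∈ M ↔ x ∈ L ∧ ∀ i, 0 ≤ x i)
    {ι : (σ → ℕ) →+ M} (hι : ∀ v, (ι v : σ → K) = fun i ↦ (v i : K))
    [Module R[σ → ℕ] R[M]]
    (hsmul : ∀ (a : R[σ → ℕ]) (x : R[M]), a • x = mapDomainRingHom R ι a * x) :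
    Module.Finite R[σ → ℕ] R[M] ∧ Module.Free R[σ → ℕ] R[M] := by
  have : Finite (unitBox M) := finite_unitBox hd fun x hx ↦ hLd x ((hM x).mp hx).1
  let basis : Module.Basis (unitBox M) R[σ → ℕ] R[M] :=
    translateBasis hsmul ⟨injective_add_unitBox hι, surjective_add_unitBox hM hι⟩
  exact ⟨.of_basis basis, .of_basis basis⟩

/-- Let `F` be a field, `n, d ≥ 1`, and `L` an additive subgroup of `ℚⁿ` with
`ℤⁿ ⊆ L ⊆ (1/d)·ℤⁿ`. Set `M = L ∩ (ℚ≥0)ⁿ`. Then the monoid algebra `F[M]` is a finitely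
generated and flat module over `F[ℕⁿ]`, via the ring homomorphism induced by the
inclusion of monoids `ℕⁿ ⊆ M`. -/
theorem monoidAlgebra_finite_flat_over_polynomials
    (F : Type*) [Field F] (n d : ℕ) (hn : 1 ≤ n) (hd : 1 ≤ d)
    (L : AddSubgroup (Fin n → ℚ))
    (hZL : ∀ v : Fin n → ℤ, (fun i => (v i : ℚ)) ∈ L)
    (hLd : ∀ x ∈ L, ∀ i : Fin n, ∃ m : ℤ, x i = (m : ℚ) / (d : ℚ))
    (M : AddSubmonoid (Fin n → ℚ))
    (hM : ∀ x : Fin n → ℚ, x ∈ M ↔ x ∈ L ∧ ∀ i, 0 ≤ x i)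
    (ι : (Fin n → ℕ) →+ M)
    (hι : ∀ v : Fin n → ℕ, ((ι v : M) : Fin n → ℚ) = fun i => (v i : ℚ)) :
    @Module.Finite (AddMonoidAlgebra F (Fin n → ℕ)) (AddMonoidAlgebra F M) _ _
      (AddMonoidAlgebra.mapDomainRingHom F ι).toModule ∧
    @Module.Flat (AddMonoidAlgebra F (Fin n → ℕ)) (AddMonoidAlgebra F M) _ _
      (AddMonoidAlgebra.mapDomainRingHom F ι).toModule := by
  let := (mapDomainRingHom F ι).toModule
  have ⟨_, _⟩ :=
    monoidAlgebra_finite_flat_over_polynomials_general (R := F) hd hLd hM hι fun _ _ ↦ rfl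
  exact ⟨inferInstance, inferInstance⟩
end

section
/- Let F be a field, n ≥ 1 and d ≥ 1 integers, and let L be an additive subgroup of ℚⁿ with ℤⁿ ⊆ L ⊆ (1/d)·ℤⁿ. Set M = L ∩ (ℚ≥0)ⁿ, an additive submonoid of ℚⁿ. Then the monoid algebra F[M] is an integral domain which is integrally closed in its field of fractions (i.e. F[M] is a normal domain). -/
/-! Multiplication by `d` embeds `M` into `ℕⁿ`, and since `M` is cut out of the subgroup `L` by
inequalities, an element of `ℕⁿ` that is a difference of two elements of the image lies in the
image. Hence forgetting the monomials outside the image is an `F[M]`-linear retraction of the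
polynomial ring `F[ℕⁿ]` onto `F[M]`. Divisibility between elements of `F[M]` can therefore be
tested in the polynomial ring, and integral closedness descends: if `a / b` is integral over
`F[M]`, then `b` divides `a` in `F[ℕⁿ]`, hence in `F[M]`. -/

open Function AddMonoidAlgebra

theorem isIntegrallyClosed_of_dvd_of_map_dvd {A B : Type*} [CommRing A] [CommRing B] [IsDomain B]
    [IsIntegrallyClosed B] (f : A →+* B) (hf : ∀ a b, f a ∣ f b → a ∣ b) :
    IsIntegrallyClosed A := by
  have f_injective : Injective f := (injective_iff_map_eq_zero f).mpr fun a ha ↦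
    zero_dvd_iff.mp (hf 0 a (by rw [ha, map_zero]))
  have : IsDomain A := f_injective.isDomain f
  have lift_injective : Injective ((algebraMap B (FractionRing B)).comp f) :=
    (IsFractionRing.injective B (FractionRing B)).comp f_injective
  let g : FractionRing A →+* FractionRing B := IsFractionRing.lift lift_injective
  have g_algebraMap (a : A) : g (algebraMap A _ a) = algebraMap B _ (f a) :=
    IsFractionRing.lift_algebraMap lift_injective a
  refine (isIntegrallyClosed_iff (FractionRing A)).mpr fun {x} hx ↦ ?_
  obtain ⟨a, b, hb, rfl⟩ := IsFractionRing.div_surjective A x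
  have algebraMap_b_ne : algebraMap A (FractionRing A) b ≠ 0 :=
    IsFractionRing.to_map_ne_zero_of_mem_nonZeroDivisors hb
  obtain ⟨y, hy⟩ : ∃ y, algebraMap B _ y = g (algebraMap A _ a / algebraMap A _ b) :=
    IsIntegrallyClosed.isIntegral_iff.mp
      (hx.map_of_comp_eq f g (RingHom.ext fun a ↦ (g_algebraMap a).symm))
  have map_eq : f a = f b * y := by
    apply IsFractionRing.injective B (FractionRing B)
    rw [map_mul, hy, ← g_algebraMap, ← g_algebraMap, ← map_mul, mul_div_cancel₀ _ algebraMap_b_ne]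
  obtain ⟨c, rfl⟩ := hf b a ⟨y, map_eq⟩
  exact ⟨c, by rw [map_mul, mul_div_cancel_left₀ _ algebraMap_b_ne]⟩

theorem isIntegrallyClosed_mvPolynomial (σ R : Type*) [CommRing R] [IsDomain R]
    [IsIntegrallyClosed R] : IsIntegrallyClosed (MvPolynomial σ R) := by
  let K := FractionRing R
  let : Algebra (MvPolynomial σ R) (MvPolynomial σ K) := MvPolynomial.algebraMvPolynomial
  have algebraMap_injective : Injective (algebraMap (MvPolynomial σ R) (MvPolynomial σ K)) :=
    MvPolynomial.map_injective _ (IsFractionRing.injective R K)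
  have : FaithfulSMul (MvPolynomial σ R) (MvPolynomial σ K) :=
    (faithfulSMul_iff_algebraMap_injective _ _).mpr algebraMap_injective
  have : IsIntegrallyClosedIn (MvPolynomial σ R) (MvPolynomial σ K) := by
    refine isIntegrallyClosedIn_iff.mpr ⟨algebraMap_injective, fun {p} hp ↦ ?_⟩
    refine MvPolynomial.mem_range_map_iff_coeffs_subset.mpr fun c hc ↦ ?_
    obtain ⟨n, -, rfl⟩ := MvPolynomial.mem_coeffs_iff.mp hc
    have coeff_integral : IsIntegral R (p.coeff n) :=
      MvPolynomial.isIntegral_iff_isIntegral_coeff.mp hp n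
    exact IsIntegrallyClosed.isIntegral_iff.mp coeff_integral
  exact .of_isIntegrallyClosed_of_isIntegrallyClosedIn _ (MvPolynomial σ K)

section ComapDomain

variable {M N R : Type*} [Semiring R] {f : M → N}

theorem comapDomain_single_of_notMem_range (hf : Injective f) {n : N} (hn : n ∉ Set.range f)
    (r : R) : comapDomain f hf (single n r) = 0 := by
  ext m
  have hm : n ≠ f m := fun h ↦ hn ⟨m, h.symm⟩
  simp [hm]

theorem comapDomain_mapDomain (hf : Injective f) (x : R[M]) :
    comapDomain f hf (mapDomain f x) = x := by
  ext m
  simp [Finsupp.mapDomain_apply hf]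

end ComapDomain

/-- An injective homomorphism of additive monoids whose image contains every `q` for which
`e m + q` lies in the image for some `m`. When `N` is commutative and cancellative, this says that
`M` is the preimage of `N` in the group completion of `M`, i.e. that `e` is exact in the sense of
logarithmic geometry. It makes `R[M]` a direct summand of the `R[M]`-module `R[N]`. -/
structure IsExactEmbedding {M N : Type*} [AddMonoid M] [AddMonoid N] (e : M →+ N) : Prop where
  injective : Injective e
  mem_range_of_add_mem_range : ∀ {m q}, e m + q ∈ Set.range e → q ∈ Set.range e

namespace IsExactEmbedding

section Monoid

variable {M N R : Type*} [AddMonoid M] [AddMonoid N] [Semiring R] {e : M →+ N}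

theorem comapDomain_mapDomainRingHom_mul (he : IsExactEmbedding e) (x : R[M]) (y : R[N]) :
    comapDomain e he.injective (mapDomainRingHom R e x * y) =
      x * comapDomain e he.injective y := by
  induction x using AddMonoidAlgebra.induction_linear with
  | zero => simp only [map_zero, zero_mul, comapDomain_zero]
  | add x₁ x₂ h₁ h₂ => simp only [map_add, add_mul, comapDomain_add, h₁, h₂]
  | single m r =>
    induction y using AddMonoidAlgebra.induction_linear with
    | zero => simp only [mul_zero, comapDomain_zero]
    | add y₁ y₂ h₁ h₂ => simp only [mul_add, comapDomain_add, h₁, h₂]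
    | single q s =>
      rw [mapDomainRingHom_apply, mapDomain_single, single_mul_single]
      by_cases hq : q ∈ Set.range e
      · obtain ⟨k, rfl⟩ := hq
        rw [← map_add, comapDomain_single_map, comapDomain_single_map, single_mul_single]
      · rw [comapDomain_single_of_notMem_range he.injective hq, mul_zero,
          comapDomain_single_of_notMem_range he.injective (mt he.mem_range_of_add_mem_range hq)]

theorem dvd_of_mapDomainRingHom_dvd (he : IsExactEmbedding e) {x y : R[M]}
    (h : mapDomainRingHom R e x ∣ mapDomainRingHom R e y) : x ∣ y := by
  obtain ⟨z, hz⟩ := h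
  refine ⟨comapDomain e he.injective z, ?_⟩
  calc
    y = comapDomain e he.injective (mapDomainRingHom R e y) :=
      (comapDomain_mapDomain he.injective y).symm
    _ = x * comapDomain e he.injective z := by rw [hz, he.comapDomain_mapDomainRingHom_mul]

end Monoid

theorem isIntegrallyClosed {M N R : Type*} [AddCommMonoid M] [AddCommMonoid N] [CommRing R]
    [IsDomain R[N]] [IsIntegrallyClosed R[N]] {e : M →+ N} (he : IsExactEmbedding e) :
    IsIntegrallyClosed R[M] :=
  isIntegrallyClosed_of_dvd_of_map_dvd (mapDomainRingHom R e) fun _ _ ↦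
    he.dvd_of_mapDomainRingHom_dvd

theorem exists_of_le_mrange {N P : Type*} [AddMonoid N] [AddMonoid P] {j : N →+ P}
    (hj : Injective j) {S : AddSubmonoid P} (hSj : S ≤ AddMonoidHom.mrange j)
    (hS : ∀ s ∈ S, ∀ q, s + j q ∈ S → j q ∈ S) : ∃ e : S →+ N, IsExactEmbedding e := by
  let j' : N ≃+ AddMonoidHom.mrange j := AddEquiv.ofBijective j.mrangeRestrict
    ⟨fun _ _ h ↦ hj (congrArg Subtype.val h), j.mrangeRestrict_surjective⟩
  let e : S →+ N := j'.symm.toAddMonoidHom.comp (AddSubmonoid.inclusion hSj)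
  have j_e (s : S) : j (e s) = s := congrArg Subtype.val (j'.apply_symm_apply _)
  refine ⟨e, fun s t hst ↦ Subtype.ext (by rw [← j_e, ← j_e, hst]), ?_⟩
  rintro s q ⟨t, ht⟩
  have j_q_mem : j q ∈ S := hS s s.2 q (by rw [← j_e, ← map_add, ← ht, j_e]; exact t.2)
  exact ⟨⟨j q, j_q_mem⟩, hj (j_e _)⟩

end IsExactEmbedding

section Lattice

variable {ι : Type*} {d : ℕ}

/-- The homomorphism `q ↦ q / d`, through which the monoid `(1/d)·ℕ^ι` is parametrized by the
exponents of monomials. -/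
def divNatHom (ι : Type*) (d : ℕ) : (ι →₀ ℕ) →+ (ι → ℚ) where
  toFun q i := q i / d
  map_zero' := by ext; simp
  map_add' q r := by ext; simp [add_div]

theorem divNatHom_injective (hd : d ≠ 0) : Injective (divNatHom ι d) := fun q r h ↦ by
  ext i
  have hi : (q i : ℚ) / d = r i / d := congrFun h i
  exact_mod_cast (div_left_inj' (Nat.cast_ne_zero.mpr hd)).mp hi

theorem divNatHom_nonneg (q : ι →₀ ℕ) : 0 ≤ divNatHom ι d q := fun i ↦
  div_nonneg (q i).cast_nonneg d.cast_nonneg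

theorem mem_mrange_divNatHom [Finite ι] {x : ι → ℚ} (hx : 0 ≤ x)
    (hxd : ∀ i, ∃ m : ℤ, x i = m / d) : x ∈ AddMonoidHom.mrange (divNatHom ι d) := by
  choose m hm using hxd
  refine ⟨Finsupp.equivFunOnFinite.symm fun i ↦ (m i).natAbs, funext fun i ↦ ?_⟩
  calc
    ((m i).natAbs : ℚ) / d = |(m i : ℚ) / d| := by
      rw [abs_div, Nat.abs_cast, Nat.cast_natAbs, Int.cast_abs]
    _ = x i := by rw [← hm, abs_of_nonneg (hx i)]

theorem exists_isExactEmbedding_finsupp_nat [Finite ι] (hd : d ≠ 0) {L : AddSubgroup (ι → ℚ)}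
    (hLd : ∀ x ∈ L, ∀ i, ∃ m : ℤ, x i = m / d) {M : AddSubmonoid (ι → ℚ)}
    (hM : ∀ x, x ∈ M ↔ x ∈ L ∧ 0 ≤ x) : ∃ e : M →+ (ι →₀ ℕ), IsExactEmbedding e := by
  refine IsExactEmbedding.exists_of_le_mrange (divNatHom_injective hd) (fun x hx ↦ ?_)
    fun x hx q hxq ↦ ?_
  · obtain ⟨x_mem, x_nonneg⟩ := (hM x).mp hx
    exact mem_mrange_divNatHom x_nonneg (hLd x x_mem)
  · have q_mem : divNatHom ι d q ∈ L :=
      (L.add_mem_cancel_left ((hM x).mp hx).1).mp ((hM _).mp hxq).1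
    exact (hM _).mpr ⟨q_mem, divNatHom_nonneg q⟩

end Lattice

theorem monoidAlgebra_isDomain_isIntegrallyClosed_general {R ι : Type*} [CommRing R] [IsDomain R]
    [IsIntegrallyClosed R] [Finite ι] {d : ℕ} (hd : d ≠ 0) {L : AddSubgroup (ι → ℚ)}
    (hLd : ∀ x ∈ L, ∀ i, ∃ m : ℤ, x i = m / d) {M : AddSubmonoid (ι → ℚ)}
    (hM : ∀ x, x ∈ M ↔ x ∈ L ∧ 0 ≤ x) : IsDomain R[M] ∧ IsIntegrallyClosed R[M] := by
  obtain ⟨e, he⟩ := exists_isExactEmbedding_finsupp_nat hd hLd hM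
  have : IsDomain R[ι →₀ ℕ] := inferInstanceAs (IsDomain (MvPolynomial ι R))
  have : IsIntegrallyClosed R[ι →₀ ℕ] := isIntegrallyClosed_mvPolynomial ι R
  exact ⟨(mapDomain_injective he.injective).isDomain (mapDomainRingHom R e), he.isIntegrallyClosed⟩

/-- Let `F` be a field, `n, d ≥ 1`, and `L` an additive subgroup of `ℚⁿ` with
`ℤⁿ ⊆ L ⊆ (1/d)·ℤⁿ`. Set `M = L ∩ (ℚ≥0)ⁿ`. Then the monoid algebra `F[M]` is an
integral domain which is integrally closed in its field of fractions. -/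
theorem monoidAlgebra_isDomain_isIntegrallyClosed
    (F : Type*) [Field F] (n d : ℕ) (hn : 1 ≤ n) (hd : 1 ≤ d)
    (L : AddSubgroup (Fin n → ℚ))
    (hZL : ∀ v : Fin n → ℤ, (fun i => (v i : ℚ)) ∈ L)
    (hLd : ∀ x ∈ L, ∀ i : Fin n, ∃ m : ℤ, x i = (m : ℚ) / (d : ℚ))
    (M : AddSubmonoid (Fin n → ℚ))
    (hM : ∀ x : Fin n → ℚ, x ∈ M ↔ x ∈ L ∧ ∀ i, 0 ≤ x i) :
    IsDomain (AddMonoidAlgebra F M) ∧ IsIntegrallyClosed (AddMonoidAlgebra F M) :=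
  monoidAlgebra_isDomain_isIntegrallyClosed_general (Nat.one_le_iff_ne_zero.mp hd) hLd hM
end

section
/- Let F be a field, n ≥ 1 and d ≥ 1 integers, and let L be an additive subgroup of ℚⁿ with ℤⁿ ⊆ L ⊆ (1/d)·ℤⁿ. Set M = L ∩ (ℚ≥0)ⁿ. Inside the monoid (group) algebra F[L], let F[ℕⁿ] denote the F-subalgebra spanned by the monomials x^s with s ∈ ℕⁿ, and let F[M] denote the F-subalgebra spanned by the monomials x^s with s ∈ M. Then F[M] equals the integral closure of F[ℕⁿ] in F[L]. -/
/-! Each coordinate of `φ : A → ℚⁿ` defines a monomial valuation on `R[A]`: its least value on the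
support. It is multiplicative even if several exponents attain the minimum, because some minimal
exponent of `f` and some minimal exponent of `g` have a sum that arises in only one way, so no
cancellation occurs in that coefficient of `f * g`. Elements of `R[φ⁻¹(ℕⁿ)]` have
nonnegative valuation, and so does every element integral over them, which puts its support in
`φ⁻¹((ℚ≥0)ⁿ)`. Conversely, a monomial with exponent in `φ⁻¹((ℚ≥0)ⁿ)` has a power with exponent in
`φ⁻¹(ℕⁿ)`, by clearing denominators. -/

open AddMonoidAlgebra

theorem addValuation_nonneg_of_isIntegral {B S Γ : Type*} [CommRing B] [CommRing S] [Algebra B S]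
    [LinearOrderedAddCommGroupWithTop Γ] (v : AddValuation S Γ)
    (hv : ∀ b : B, 0 ≤ v (algebraMap B S b)) {x : S} (hx : IsIntegral B x) : 0 ≤ v x := by
  let w := AddValuation.toValuation v
  let f : B →+* w.integer := (algebraMap B S).codRestrict w.integer hv
  obtain ⟨p, hp, hpx⟩ := hx
  have hx' : IsIntegral w.integer x := ⟨p.map f, hp.map f, by rwa [Polynomial.eval₂_map]⟩
  exact (Valuation.integer.integers w).mem_of_integral hx'

section UniqueSums

variable {A Γ : Type*} [Add A] [UniqueSums A]
  [AddCommMonoid Γ] [LinearOrder Γ] [IsOrderedCancelAddMonoid Γ]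
  {H : Type*} [FunLike H A Γ] [AddHomClass H A Γ] (D : H)

theorem exists_minimal_uniqueAdd {s t : Finset A} (hs : s.Nonempty) (ht : t.Nonempty) :
    ∃ a ∈ s, ∃ b ∈ t, (∀ c ∈ s, D a ≤ D c) ∧ (∀ c ∈ t, D b ≤ D c) ∧ UniqueAdd s t a b := by
  obtain ⟨a₀, ha₀, hs_min⟩ := s.exists_min_image D hs
  obtain ⟨b₀, hb₀, ht_min⟩ := t.exists_min_image D ht
  obtain ⟨a, ha, b, hb, hab⟩ := UniqueSums.uniqueAdd_of_nonempty
    (A := {c ∈ s | D c = D a₀}) (B := {c ∈ t | D c = D b₀})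
    ⟨a₀, by simpa using ha₀⟩ ⟨b₀, by simpa using hb₀⟩
  rw [Finset.mem_filter] at ha hb
  have unique_min : UniqueAdd (s.image D) (t.image D) (D a₀) (D b₀) := by
    intro x y hx hy hxy
    obtain ⟨c, hc, rfl⟩ := Finset.mem_image.1 hx
    obtain ⟨d, hd, rfl⟩ := Finset.mem_image.1 hy
    have h := (add_eq_add_iff_eq_and_eq (hs_min c hc) (ht_min d hd)).1 hxy.symm
    exact ⟨h.1.symm, h.2.symm⟩
  exact ⟨a, ha.1, b, hb.1, ha.2 ▸ hs_min, hb.2 ▸ ht_min,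
    UniqueAdd.of_image_filter (D : A →ₙ+ Γ) ha.2 hb.2 unique_min hab⟩

theorem infDegree_mul {R : Type*} [Semiring R] [NoZeroDivisors R] (f g : R[A]) :
    (f * g).infDegree (fun a ↦ (D a : WithTop Γ)) =
      f.infDegree (fun a ↦ (D a : WithTop Γ)) + g.infDegree (fun a ↦ (D a : WithTop Γ)) := by
  rcases eq_or_ne f 0 with rfl | hf
  · simp [infDegree]
  rcases eq_or_ne g 0 with rfl | hg
  · simp [infDegree]
  obtain ⟨a, ha, b, hb, ha_min, hb_min, hab⟩ := exists_minimal_uniqueAdd D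
    (Finsupp.support_nonempty_iff.2 (coeff_eq_zero.not.2 hf))
    (Finsupp.support_nonempty_iff.2 (coeff_eq_zero.not.2 hg))
  have hmem : a + b ∈ (f * g).coeff.support := by
    rw [Finsupp.mem_support_iff, coeff_mul_add_of_uniqueAdd hab]
    exact mul_ne_zero (Finsupp.mem_support_iff.1 ha) (Finsupp.mem_support_iff.1 hb)
  apply le_antisymm
  · calc (f * g).infDegree (fun a ↦ (D a : WithTop Γ))
        ≤ (D (a + b) : WithTop Γ) := Finset.inf_le hmem
      _ = D a + D b := by rw [map_add, WithTop.coe_add]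
      _ ≤ _ := add_le_add (Finset.le_inf fun c hc ↦ WithTop.coe_le_coe.2 (ha_min c hc))
          (Finset.le_inf fun c hc ↦ WithTop.coe_le_coe.2 (hb_min c hc))
  · exact le_inf_support_coeff_mul (fun {a b} ↦ by rw [map_add, WithTop.coe_add]) f g

end UniqueSums

theorem mem_adjoin_of'_of_support_subset {R A : Type*} [CommSemiring R] [AddMonoid A]
    {s : Set A} {f : R[A]} (hf : ↑f.coeff.support ⊆ s) : f ∈ Algebra.adjoin R (of' R A '' s) :=
  Algebra.span_le_adjoin R _ (Submodule.span_mono (Set.image_mono hf) (mem_span_support_coeff f))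

section Integrality

variable {R A Γ : Type*} [CommRing R] [AddCommMonoid A]

section MonomialValuation

variable [IsDomain R] [UniqueSums A] [AddCommGroup Γ] [LinearOrder Γ] [IsOrderedAddMonoid Γ]

/-- The monomial valuation on `R[A]` with weights `D`: the least weight of an exponent in the
support, and `⊤` at `0`. -/
noncomputable def monomialValuation (D : A →+ Γ) : AddValuation R[A] (WithTop Γ) :=
  AddValuation.of (infDegree fun a ↦ (D a : WithTop Γ)) (by simp [infDegree])
    (by simp [one_def, infDegree]) (le_infDegree_add _) (infDegree_mul D)

theorem monomialValuation_nonneg_iff (D : A →+ Γ) {f : R[A]} :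
    0 ≤ monomialValuation D f ↔ ∀ a ∈ f.coeff.support, 0 ≤ D a := by
  rw [monomialValuation, AddValuation.of_apply, Finset.le_inf_iff]
  simp only [WithTop.coe_nonneg]

theorem monomialValuation_nonneg_of_mem_adjoin (D : A →+ Γ) {s : Set A} (hs : ∀ a ∈ s, 0 ≤ D a)
    {f : R[A]} (hf : f ∈ Algebra.adjoin R (of' R A '' s)) : 0 ≤ monomialValuation D f := by
  have single_nonneg {a : A} (ha : 0 ≤ D a) (r : R) : 0 ≤ monomialValuation D (single a r) := by
    refine (monomialValuation_nonneg_iff D).2 fun b hb ↦ ?_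
    rwa [Finset.mem_singleton.1 (Finsupp.support_single_subset hb)]
  induction hf using Algebra.adjoin_induction with
  | mem _ hy =>
    obtain ⟨a, ha, rfl⟩ := hy
    exact single_nonneg (hs a ha) 1
  | algebraMap r => exact single_nonneg (map_zero D).ge r
  | add f g _ _ hf hg => exact AddValuation.map_le_add _ hf hg
  | mul f g _ _ hf hg => exact (add_nonneg hf hg).trans_eq (AddValuation.map_mul _ f g).symm

theorem nonneg_of_isIntegral_adjoin (D : A →+ Γ) {s : Set A} (hs : ∀ a ∈ s, 0 ≤ D a) {f : R[A]}
    (hf : IsIntegral (Algebra.adjoin R (of' R A '' s)) f) {a : A} (ha : a ∈ f.coeff.support) :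
    0 ≤ D a :=
  (monomialValuation_nonneg_iff D).1 (addValuation_nonneg_of_isIntegral _
    (fun b ↦ monomialValuation_nonneg_of_mem_adjoin D hs b.2) hf) a ha

end MonomialValuation

theorem isIntegral_of_mem_adjoin_of_nsmul_mem {s t : Set A}
    (hst : ∀ a ∈ t, ∃ k : ℕ, 0 < k ∧ k • a ∈ s) {f : R[A]}
    (hf : f ∈ Algebra.adjoin R (of' R A '' t)) :
    IsIntegral (Algebra.adjoin R (of' R A '' s)) f := by
  let C := (integralClosure (Algebra.adjoin R (of' R A '' s)) R[A]).restrictScalars R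
  suffices Algebra.adjoin R (of' R A '' t) ≤ C from this hf
  refine Algebra.adjoin_le ?_
  rintro _ ⟨a, ha, rfl⟩
  obtain ⟨k, hk, hka⟩ := hst a ha
  have hpow : of' R A a ^ k ∈ Algebra.adjoin R (of' R A '' s) := by
    rw [of', single_pow, one_pow]
    exact Algebra.subset_adjoin ⟨k • a, hka, rfl⟩
  exact IsIntegral.of_pow hk
    (isIntegral_algebraMap (R := Algebra.adjoin R (of' R A '' s)) (x := ⟨_, hpow⟩))

end Integrality

theorem exists_nsmul_eq_natCast_of_nonneg {ι : Type*} [Finite ι] {q : ι → ℚ} (hq : ∀ i, 0 ≤ q i) :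
    ∃ k : ℕ, 0 < k ∧ ∀ i, ∃ m : ℕ, (k • q) i = m := by
  cases nonempty_fintype ι
  refine ⟨∏ i, (q i).den, Finset.prod_pos fun i _ ↦ (q i).den_pos, fun i ↦ ?_⟩
  obtain ⟨c, hc⟩ := Finset.dvd_prod_of_mem (fun i ↦ (q i).den) (Finset.mem_univ i)
  obtain ⟨p, hp⟩ := Int.eq_ofNat_of_zero_le (Rat.num_nonneg.2 (hq i))
  refine ⟨c * p, ?_⟩
  calc ((∏ i, (q i).den) • q) i = c * (q i * (q i).den) := by
        rw [hc, Pi.smul_apply, nsmul_eq_mul]; push_cast; ring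
    _ = (c * p : ℕ) := by rw [Rat.mul_den_eq_num, hp]; push_cast; rfl

theorem monoidAlgebra_eq_integralClosure_general
    (R : Type*) [CommRing R] [IsDomain R] {A ι : Type*} [AddCommMonoid A] [UniqueSums A] [Finite ι]
    (φ : A →+ (ι → ℚ)) (x : R[A]) :
    x ∈ Algebra.adjoin R {y : R[A] | ∃ s : A, (∀ i, 0 ≤ φ s i) ∧ y = of' R A s} ↔
      x ∈ integralClosure
        (Algebra.adjoin R {y : R[A] | ∃ s : A, (∀ i, ∃ m : ℕ, φ s i = m) ∧ y = of' R A s})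
        R[A] := by
  have setOf_eq_image (p : A → Prop) : {y | ∃ s, p s ∧ y = of' R A s} = of' R A '' {s | p s} := by
    simp only [Set.image, Set.mem_ofPred_eq, eq_comm]
  rw [setOf_eq_image, setOf_eq_image, mem_integralClosure_iff]
  constructor
  · refine isIntegral_of_mem_adjoin_of_nsmul_mem fun a ha ↦ ?_
    simpa only [Set.mem_ofPred_eq, map_nsmul] using exists_nsmul_eq_natCast_of_nonneg ha
  · intro hx
    refine mem_adjoin_of'_of_support_subset fun a ha i ↦ ?_
    refine nonneg_of_isIntegral_adjoin ((Pi.evalAddMonoidHom (fun _ ↦ ℚ) i).comp φ) ?_ hx ha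
    intro b hb
    obtain ⟨m, hm⟩ := hb i
    exact m.cast_nonneg.trans_eq hm.symm

/-- Let `F` be a field, `n, d ≥ 1`, and `L` an additive subgroup of `ℚⁿ` with
`ℤⁿ ⊆ L ⊆ (1/d)·ℤⁿ`; set `M = L ∩ (ℚ≥0)ⁿ`. Inside the group algebra `F[L]`, the
`F`-subalgebra `F[M]` spanned by the monomials `x^s` with `s ∈ M` equals the integral
closure of the `F`-subalgebra `F[ℕⁿ]` spanned by the monomials `x^s`, `s ∈ ℕⁿ`. -/
theorem monoidAlgebra_eq_integralClosure
    (F : Type*) [Field F] (n d : ℕ) (hn : 1 ≤ n) (hd : 1 ≤ d)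
    (L : AddSubgroup (Fin n → ℚ))
    (hZL : ∀ v : Fin n → ℤ, (fun i => (v i : ℚ)) ∈ L)
    (hLd : ∀ x ∈ L, ∀ i : Fin n, ∃ m : ℤ, x i = (m : ℚ) / (d : ℚ)) :
    ∀ x : AddMonoidAlgebra F L,
      x ∈ Algebra.adjoin F {y : AddMonoidAlgebra F L |
            ∃ s : L, (∀ i, 0 ≤ (s : Fin n → ℚ) i) ∧ y = AddMonoidAlgebra.of' F L s} ↔
      x ∈ integralClosure
            (Algebra.adjoin F {y : AddMonoidAlgebra F L |
              ∃ s : L, (∀ i, ∃ m : ℕ, (s : Fin n → ℚ) i = (m : ℚ)) ∧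
                y = AddMonoidAlgebra.of' F L s})
            (AddMonoidAlgebra F L) := by
  have : UniqueSums L := .of_injective_addHom (L.subtype : L →ₙ+ (Fin n → ℚ))
    L.subtype_injective inferInstance
  exact monoidAlgebra_eq_integralClosure_general F L.subtype
end
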